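/- Convexity of classical minus quantum entropy on a single space (Holevo-type bound): Let P^1,…,P^M be positive semidefinite operators on a finite-dimensional complex Hilbert space H with ∑_α P^α = id_H, and define S^cl[ρ] = ∑_α φ( Tr[P^α ρ] ) with φ(x) = −x ln x (and φ(0)=0). Then the map ρ ↦ S^cl[ρ] − S[ρ] is convex on the set of density matrices on H: for density matrices A, B and t ∈ [0,1], S^cl[tA+(1−t)B] − S[tA+(1−t)B] ≤ t( S^cl[A] − S[A] ) + (1−t)( S^cl[B] − S[B] ). -/

import Mathlib

open Matrix Kronecker Real
open scoped ComplexOrder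

/-- Von Neumann entropy of a (Hermitian) matrix: the sum of `-λ ln λ` over its
eigenvalues, with the convention `0 ln 0 = 0`. -/
noncomputable def entropy {n : Type*} [Fintype n] [DecidableEq n]
    (A : Matrix n n ℂ) : ℝ :=
  if h : A.IsHermitian then ∑ i, Real.negMulLog (h.eigenvalues i) else 0

/-- Partial trace over the first factor of a twofold tensor product. -/
noncomputable def ptraceFst {m k : Type*} [Fintype m]
    (ρ : Matrix (m × k) (m × k) ℂ) : Matrix k k ℂ :=
  Matrix.of fun i j => ∑ a : m, ρ (a, i) (a, j)

/-- Partial trace over the second factor of a twofold tensor product. -/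
noncomputable def ptraceSnd {m k : Type*} [Fintype k]
    (ρ : Matrix (m × k) (m × k) ℂ) : Matrix m m ℂ :=
  Matrix.of fun i j => ∑ a : k, ρ (i, a) (j, a)

/-- Partial trace over the first factor of a threefold tensor product
(indexed as `(H₁ ⊗ H₂) ⊗ H₃`). -/
noncomputable def ptraceFst₃ {a b c : Type*} [Fintype a]
    (ρ : Matrix ((a × b) × c) ((a × b) × c) ℂ) : Matrix (b × c) (b × c) ℂ :=
  Matrix.of fun p q => ∑ i : a, ρ ((i, p.1), p.2) ((i, q.1), q.2)

lemma aux_deriv {ι : Type*} [Fintype ι] (w x y : ι → ℝ) (hx : ∀ i, 0 ≤ x i) (hy : ∀ i, 0 ≤ y i)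
    (h0 : ∀ i, y i = 0 → w i * x i = 0) (T : ℝ) (hT : 0 ≤ T) :
    HasDerivAt (fun T => ∑ i, w i * x i * Real.log (1 + T * (x i / y i)))
      (∑ i, w i * (x i ^ 2 / (y i + T * x i))) T := by
  refine HasDerivAt.fun_sum fun i _ => ?_
  rcases (hy i).eq_or_lt with h | h
  · have h1 := h0 i h.symm
    have h2 : w i * (x i ^ 2 / (y i + T * x i)) = 0 := by
      rw [show w i * (x i ^ 2 / (y i + T * x i)) = (w i * x i) * (x i / (y i + T * x i)) by ring,
        h1, zero_mul]
    rw [h2]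
    simp only [h1, zero_mul]
    exact hasDerivAt_const _ _
  · have hz : 0 ≤ T * (x i / y i) := by have := hx i; positivity
    have h3 : HasDerivAt (fun T : ℝ => 1 + T * (x i / y i)) (1 * (x i / y i)) T :=
      ((hasDerivAt_id T).mul_const _).const_add _
    have h4 := (h3.log (by positivity)).const_mul (w i * x i)
    refine h4.congr_deriv ?_
    have : 0 < y i + T * x i := by have := hx i; positivity
    have e : 1 + T * (x i / y i) = (y i + T * x i) / y i := by field_simp
    rw [e]
    field_simp

lemma aux_tendsto {ι : Type*} [Fintype ι] (w x y : ι → ℝ)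
    (h0 : ∀ i, y i = 0 → w i * x i = 0) :
    Filter.Tendsto (fun e : ℝ => ∑ i, w i * x i * Real.log (e + x i / y i))
      (nhdsWithin 0 (Set.Ioi 0)) (nhds (∑ i, w i * x i * (Real.log (x i) - Real.log (y i)))) := by
  refine tendsto_finsetSum _ fun i _ => ?_
  by_cases h : w i * x i = 0
  · simp [h]
  · have hxi : x i ≠ 0 := fun h' => h (by simp [h'])
    have hyi : y i ≠ 0 := fun h' => h (h0 i h')
    rw [← Real.log_div hxi hyi]
    have : ContinuousAt (fun e : ℝ => w i * x i * Real.log (e + x i / y i)) 0 := by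
      refine ContinuousAt.mul continuousAt_const (ContinuousAt.log (by fun_prop) ?_)
      simp [hxi, hyi]
    have h2 := this.tendsto
    simp only [zero_add] at h2
    exact h2.mono_left nhdsWithin_le_nhds

lemma aux_scale {ι : Type*} [Fintype ι] (w x y : ι → ℝ) (hx : ∀ i, 0 ≤ x i) (hy : ∀ i, 0 ≤ y i)
    (e : ℝ) (he : 0 < e) :
    ∑ i, w i * x i * Real.log (1 + e⁻¹ * (x i / y i)) =
      ∑ i, w i * x i * Real.log (e + x i / y i) - (∑ i, w i * x i) * Real.log e := by
  rw [Finset.sum_mul, ← Finset.sum_sub_distrib]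
  refine Finset.sum_congr rfl fun i _ => ?_
  have : 0 ≤ x i / y i := div_nonneg (hx i) (hy i)
  rw [show 1 + e⁻¹ * (x i / y i) = (e + x i / y i) / e by field_simp,
    Real.log_div (by positivity) he.ne']
  ring

lemma scalar_main {ι κ : Type*} [Fintype ι] [Fintype κ] (w x y : ι → ℝ) (w' x' y' : κ → ℝ)
    (hx : ∀ i, 0 ≤ x i) (hy : ∀ i, 0 ≤ y i) (h0 : ∀ i, y i = 0 → w i * x i = 0)
    (hx' : ∀ i, 0 ≤ x' i) (hy' : ∀ i, 0 ≤ y' i) (h0' : ∀ i, y' i = 0 → w' i * x' i = 0)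
    (hs : ∑ i, w i * x i = ∑ i, w' i * x' i)
    (hT : ∀ T : ℝ, 0 ≤ T → ∑ i, w i * (x i ^ 2 / (y i + T * x i)) ≤
      ∑ i, w' i * (x' i ^ 2 / (y' i + T * x' i))) :
    ∑ i, w i * x i * (Real.log (x i) - Real.log (y i)) ≤
      ∑ i, w' i * x' i * (Real.log (x' i) - Real.log (y' i)) := by
  refine le_of_tendsto_of_tendsto (aux_tendsto w x y h0) (aux_tendsto w' x' y' h0') ?_
  filter_upwards [self_mem_nhdsWithin] with e he
  have he : 0 < e := he
  have key := fun T (hT : 0 ≤ T) => (aux_deriv w' x' y' hx' hy' h0' T hT).sub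
    (aux_deriv w x y hx hy h0 T hT)
  have mono := monotoneOn_of_hasDerivWithinAt_nonneg (convex_Ici (0:ℝ))
    (fun T hT => (key T hT).continuousAt.continuousWithinAt)
    (fun T hT => (key T (interior_subset hT)).hasDerivWithinAt)
    (fun T h => sub_nonneg.2 (hT T (interior_subset h)))
  have h1 := mono (Set.mem_Ici.2 le_rfl) (Set.mem_Ici.2 (inv_nonneg.2 he.le)) (inv_nonneg.2 he.le)
  simp only [Pi.sub_apply] at h1
  rw [aux_scale w x y hx hy e he, aux_scale w' x' y' hx' hy' e he, hs] at h1
  simp at h1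
  linarith


open scoped MatrixOrder Matrix.Norms.L2Operator in
lemma trace_mul_nonneg' {n : Type*} [Fintype n] [DecidableEq n] {P A : Matrix n n ℂ}
    (hP : P.PosSemidef) (hA : A.PosSemidef) : 0 ≤ ((P * A).trace).re := by
  obtain ⟨R, rfl⟩ := CStarAlgebra.nonneg_iff_eq_star_mul_self.mp hP.nonneg
  rw [Matrix.star_eq_conjTranspose, Matrix.mul_assoc, Matrix.trace_mul_comm]
  exact (Complex.le_def.1 (hA.mul_mul_conjTranspose_same R).trace_nonneg).1

lemma kadison {n : Type*} [Fintype n] [DecidableEq n] {M : ℕ}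
    (P : Fin M → Matrix n n ℂ) (hP : ∀ α, (P α).PosSemidef)
    (hPsum : ∑ α, P α = 1) (y : Fin M → ℝ) :
    (∑ α, ((y α : ℂ) ^ 2) • P α - (∑ α, (y α : ℂ) • P α) * (∑ α, (y α : ℂ) • P α)).PosSemidef := by
  set Y := ∑ α, (y α : ℂ) • P α with hY
  have hYh : Yᴴ = Y := by
    simp [hY, Matrix.conjTranspose_sum, Matrix.conjTranspose_smul, fun α => (hP α).1.eq]
  have : ∑ α, ((y α : ℂ) ^ 2) • P α - Y * Y =
      ∑ α, ((y α : ℂ) • (1 : Matrix n n ℂ) - Y)ᴴ * P α * ((y α : ℂ) • (1 : Matrix n n ℂ) - Y) := by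
    have e : ∀ α, ((y α : ℂ) • (1 : Matrix n n ℂ) - Y)ᴴ * P α * ((y α : ℂ) • (1 : Matrix n n ℂ) - Y)
        = ((y α : ℂ) ^ 2) • P α - ((y α : ℂ) • P α) * Y - Y * ((y α : ℂ) • P α) + Y * P α * Y := by
      intro α
      simp only [Matrix.conjTranspose_sub, Matrix.conjTranspose_smul, Matrix.conjTranspose_one,
        Complex.star_def, Complex.conj_ofReal, hYh, Matrix.sub_mul, Matrix.mul_sub, pow_two,
        ← smul_smul, Matrix.smul_mul, Matrix.mul_smul, Matrix.one_mul, Matrix.mul_one, smul_sub]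
      abel
    simp only [e, Finset.sum_add_distrib, Finset.sum_sub_distrib, ← Finset.sum_mul,
      ← Finset.mul_sum, ← hY, hPsum]
    simp
  rw [this]
  exact Matrix.posSemidef_sum _ fun α _ => (hP α).conjTranspose_mul_mul_same _

lemma young (r s d T : ℝ) (hr : 0 ≤ r) (hs : 0 ≤ s) (hT : 0 ≤ T) (w z : ℂ)
    (hd : d = Complex.normSq w) (h0 : s = 0 → d * r = 0) :
    2 * (r * (star w * z).re) ≤ d * (r ^ 2 / (s + T * r)) + (s + T * r) * Complex.normSq z := by
  have hz := Complex.normSq_nonneg z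
  have hTr : 0 ≤ T * r := by positivity
  have hd0 : 0 ≤ d := hd ▸ Complex.normSq_nonneg w
  by_cases h : d * r = 0
  · have : r * (star w * z).re = 0 := by
      rcases mul_eq_zero.1 h with h | h
      · rw [hd, Complex.normSq_eq_zero] at h
        simp [h]
      · simp [h]
    rw [this, mul_zero]; positivity
  · have hs' : 0 < s := hs.lt_of_ne fun h' => h (h0 h'.symm)
    have hD : 0 < s + T * r := by positivity
    set D := s + T * r
    have key := Complex.normSq_nonneg ((r : ℂ) * w - (D : ℂ) * z)
    have e : Complex.normSq ((r : ℂ) * w - (D : ℂ) * z) =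
        r ^ 2 * d + D ^ 2 * Complex.normSq z - 2 * D * (r * (star w * z).re) := by
      rw [hd]; simp [Complex.normSq_apply]; ring
    rw [e] at key
    rw [← sub_nonneg]
    have : d * (r ^ 2 / D) + D * Complex.normSq z - 2 * (r * (star w * z).re) =
      (r ^ 2 * d + D ^ 2 * Complex.normSq z - 2 * D * (r * (star w * z).re)) / D := by
      field_simp
    rw [this]; positivity

/-- real diagonal -/
noncomputable def rdiag {n : Type*} [DecidableEq n] (r : n → ℝ) : Matrix n n ℂ :=
  Matrix.diagonal fun i => (r i : ℂ)

lemma tr_rdiag {n : Type*} [Fintype n] [DecidableEq n] (r : n → ℝ) (X Z : Matrix n n ℂ) :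
    ((rdiag r * (X * Z)).trace).re = ∑ i, ∑ j, r i * (X i j * Z j i).re := by
  simp only [rdiag, Matrix.trace, Matrix.diag_apply, Matrix.diagonal_mul]
  simp only [Matrix.mul_apply,
    Finset.mul_sum, Complex.re_sum, Complex.re_ofReal_mul]

lemma quantum_var {n : Type*} [Fintype n] [DecidableEq n] (r s : n → ℝ)
    (hr : ∀ i, 0 ≤ r i) (hs : ∀ i, 0 ≤ s i) (U V : Matrix n n ℂ)
    (hU : U * Uᴴ = 1) (hV : V * Vᴴ = 1)
    (h0 : ∀ i j, s j = 0 → Complex.normSq ((Vᴴ * U) j i) * r i = 0) (T : ℝ) (hT : 0 ≤ T)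
    (Y : Matrix n n ℂ) (hY : Yᴴ = Y) :
    2 * ((U * rdiag r * Uᴴ * Y).trace).re - ((V * rdiag s * Vᴴ * (Y * Y)).trace).re
      - T * ((U * rdiag r * Uᴴ * (Y * Y)).trace).re ≤
    ∑ k : n × n, Complex.normSq ((Vᴴ * U) k.2 k.1) * (r k.1 ^ 2 / (s k.2 + T * r k.1)) := by
  have e1 : (U * rdiag r * Uᴴ * Y).trace = (rdiag r * ((Vᴴ * U)ᴴ * (Vᴴ * Y * U))).trace := by
    rw [Matrix.mul_assoc, Matrix.mul_assoc, Matrix.trace_mul_comm]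
    simp only [Matrix.conjTranspose_mul, Matrix.conjTranspose_conjTranspose, Matrix.mul_assoc]
    rw [← Matrix.mul_assoc V, hV, Matrix.one_mul]
  have e2 : (V * rdiag s * Vᴴ * (Y * Y)).trace =
      (rdiag s * ((Vᴴ * Y * U) * (Vᴴ * Y * U)ᴴ)).trace := by
    rw [Matrix.mul_assoc, Matrix.mul_assoc, Matrix.trace_mul_comm]
    simp only [Matrix.conjTranspose_mul, Matrix.conjTranspose_conjTranspose, Matrix.mul_assoc, hY]
    rw [← Matrix.mul_assoc U, hU, Matrix.one_mul]
  have e3 : (U * rdiag r * Uᴴ * (Y * Y)).trace =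
      (rdiag r * ((Vᴴ * Y * U)ᴴ * (Vᴴ * Y * U))).trace := by
    rw [Matrix.mul_assoc, Matrix.mul_assoc, Matrix.trace_mul_comm]
    simp only [Matrix.conjTranspose_mul, Matrix.conjTranspose_conjTranspose, Matrix.mul_assoc, hY]
    rw [← Matrix.mul_assoc V, hV, Matrix.one_mul]
  rw [e1, e2, e3, tr_rdiag, tr_rdiag, tr_rdiag, Finset.sum_comm (f := fun i j => s i * _),
    Fintype.sum_prod_type]
  simp only [Finset.mul_sum, ← Finset.sum_sub_distrib]
  refine Finset.sum_le_sum fun i _ => Finset.sum_le_sum fun j _ => ?_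
  have := young (r i) (s j) _ T (hr i) (hs j) hT ((Vᴴ * U) j i) ((Vᴴ * Y * U) j i) rfl (h0 i j)
  simp only [Matrix.conjTranspose_apply] at this ⊢
  have h1 : ∀ z : ℂ, (star z * z).re = Complex.normSq z := by
    intro z; simp [Complex.normSq_apply]
  have h2 : ∀ z : ℂ, (z * star z).re = Complex.normSq z := by
    intro z; simp [Complex.normSq_apply]
  rw [h1, h2]
  linarith

lemma diag_conj {n : Type*} [Fintype n] [DecidableEq n] (r : n → ℝ) (W : Matrix n n ℂ) (j : n) :
    ((W * rdiag r * Wᴴ) j j).re = ∑ i, Complex.normSq (W j i) * r i := by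
  simp only [rdiag, Matrix.mul_apply (M := W * _), Matrix.mul_diagonal, Complex.re_sum,
    Matrix.conjTranspose_apply]
  refine Finset.sum_congr rfl fun i _ => ?_
  simp [Complex.normSq_apply]; ring

lemma norm_col {n : Type*} [Fintype n] [DecidableEq n] (W : Matrix n n ℂ) (hW : Wᴴ * W = 1) (i : n) :
    ∑ j, Complex.normSq (W j i) = 1 := by
  have := congrArg Complex.re (congrFun (congrFun hW i) i)
  simp only [Matrix.mul_apply, Complex.re_sum, Matrix.conjTranspose_apply, Matrix.one_apply_eq,
    Complex.one_re] at this
  rw [← this]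
  refine Finset.sum_congr rfl fun j _ => ?_
  simp [Complex.normSq_apply]

lemma dataproc {n : Type*} [Fintype n] [DecidableEq n] {M : ℕ}
    (P : Fin M → Matrix n n ℂ) (hP : ∀ α, (P α).PosSemidef)
    (hPsum : ∑ α, P α = 1) (r s : n → ℝ)
    (hr : ∀ i, 0 ≤ r i) (hs : ∀ i, 0 ≤ s i) (U V A C K : Matrix n n ℂ)
    (hU : U * Uᴴ = 1) (hV : V * Vᴴ = 1) (hAp : A.PosSemidef) (hCp : C.PosSemidef)
    (hA : A = U * rdiag r * Uᴴ) (hC : C = V * rdiag s * Vᴴ) (τ : ℝ) (hτ : 0 < τ)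
    (hK : K.PosSemidef) (hCK : C = (τ : ℂ) • A + K) :
    ∑ α, ((P α * A).trace).re * (Real.log ((P α * A).trace).re - Real.log ((P α * C).trace).re) ≤
      ∑ i, r i * Real.log (r i) - ∑ j, ((Vᴴ * A * V) j j).re * Real.log (s j) := by
  have hU' : Uᴴ * U = 1 := mul_eq_one_comm.1 hU
  have hV' : Vᴴ * V = 1 := mul_eq_one_comm.1 hV
  set W := Vᴴ * U with hW
  have hWW : Wᴴ * W = 1 := by
    rw [hW, Matrix.conjTranspose_mul, Matrix.conjTranspose_conjTranspose, Matrix.mul_assoc,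
      ← Matrix.mul_assoc V, hV, Matrix.one_mul, hU']
  have haj : ∀ j, ((Vᴴ * A * V) j j).re = ∑ i, Complex.normSq (W j i) * r i := by
    intro j
    rw [← diag_conj, hA, hW]
    simp only [Matrix.conjTranspose_mul, Matrix.conjTranspose_conjTranspose, Matrix.mul_assoc]
  have hsj : ∀ j, s j = τ * ((Vᴴ * A * V) j j).re + ((Vᴴ * K * V) j j).re := by
    intro j
    have h1 : Vᴴ * C * V = rdiag s := by
      rw [hC, show Vᴴ * (V * rdiag s * Vᴴ) * V = (Vᴴ * V) * rdiag s * (Vᴴ * V) by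
        simp only [Matrix.mul_assoc], hV']
      simp
    have h2 : s j = ((Vᴴ * C * V) j j).re := by rw [h1]; simp [rdiag]
    rw [h2, hCK]
    simp [Matrix.mul_add, Matrix.add_mul]
  have hKj : ∀ j, 0 ≤ ((Vᴴ * K * V) j j).re := fun j =>
    (Complex.le_def.1 (hK.conjTranspose_mul_mul_same V).diag_nonneg).1
  have h0 : ∀ i j, s j = 0 → Complex.normSq (W j i) * r i = 0 := by
    intro i j h
    have hnn : ∀ i ∈ Finset.univ, 0 ≤ Complex.normSq (W j i) * r i :=
      fun i _ => mul_nonneg (Complex.normSq_nonneg _) (hr i)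
    have h1 : ∑ i, Complex.normSq (W j i) * r i = 0 := by
      refine le_antisymm ?_ (Finset.sum_nonneg hnn)
      have := hsj j
      rw [haj, h] at this
      have := hKj j
      by_contra! hlt
      have := mul_pos hτ hlt
      linarith
    exact (Finset.sum_eq_zero_iff_of_nonneg hnn).1 h1 i (Finset.mem_univ _)
  have hp := fun α => trace_mul_nonneg' (hP α) hAp
  have hq := fun α => trace_mul_nonneg' (hP α) hCp
  have hqp : ∀ α, ((P α * C).trace).re = 0 → ((P α * A).trace).re = 0 := by
    intro α h
    have h1 := trace_mul_nonneg' (hP α) hK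
    have h2 := hp α
    rw [hCK] at h
    simp [Matrix.mul_add] at h
    by_contra hne
    have := mul_pos hτ (lt_of_le_of_ne h2 (Ne.symm hne))
    linarith
  have hcr : ∑ k : n × n, Complex.normSq (W k.2 k.1) * r k.1 = ∑ i, r i := by
    rw [Fintype.sum_prod_type]
    refine Finset.sum_congr rfl fun i _ => ?_
    dsimp only
    rw [← Finset.sum_mul, norm_col W hWW, one_mul]
  have hpsum : ∑ α, ((P α * A).trace).re = ∑ i, r i := by
    rw [← Complex.re_sum, ← Matrix.trace_sum, ← Finset.sum_mul, hPsum, Matrix.one_mul, hA,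
      Matrix.trace_mul_comm, ← Matrix.mul_assoc, hU']
    simp [rdiag, Matrix.trace]
  have main := scalar_main (fun _ : Fin M => (1:ℝ)) (fun α => ((P α * A).trace).re)
    (fun α => ((P α * C).trace).re)
    (fun k : n × n => Complex.normSq (W k.2 k.1)) (fun k => r k.1) (fun k => s k.2)
    hp hq (fun α h => by simpa using hqp α h) (fun k => hr _) (fun k => hs _)
    (fun k h => h0 _ _ h) (by simp only [one_mul]; rw [hpsum, hcr]) ?_
  · simp only [one_mul] at main
    refine main.trans_eq ?_
    rw [Fintype.sum_prod_type]
    simp only [mul_sub, Finset.sum_sub_distrib]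
    congr 1
    · refine Finset.sum_congr rfl fun i _ => ?_
      rw [← Finset.sum_mul, ← Finset.sum_mul, norm_col W hWW, one_mul]
    · rw [Finset.sum_comm]
      refine Finset.sum_congr rfl fun j _ => ?_
      rw [← Finset.sum_mul, haj]
  · intro T hT
    set p := fun α => ((P α * A).trace).re with hpd
    set q := fun α => ((P α * C).trace).re with hqd
    let y : Fin M → ℝ := fun α => p α / (q α + T * p α)
    let Y := ∑ α, (y α : ℂ) • P α
    have hYh : Yᴴ = Y := by
      simp [Y, Matrix.conjTranspose_sum, Matrix.conjTranspose_smul, fun α => (hP α).1.eq]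
    have hv := quantum_var r s hr hs U V hU hV h0 T hT Y hYh
    rw [← hA, ← hC] at hv
    refine le_trans ?_ hv
    have hkad := kadison P hP hPsum y
    have tr1 : ((A * Y).trace).re = ∑ α, y α * p α := by
      simp [Y, Matrix.mul_sum, Matrix.trace_sum, p, Matrix.trace_mul_comm A]
    have tr2 : ∀ X : Matrix n n ℂ, X.PosSemidef → ((X * (Y * Y)).trace).re ≤
        ∑ α, y α ^ 2 * ((P α * X).trace).re := by
      intro X hX
      have := trace_mul_nonneg' hkad hX
      rw [Matrix.sub_mul, Matrix.trace_sub, Complex.sub_re, Matrix.trace_mul_comm (_ * _) X] at this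
      refine (sub_nonneg.1 this).trans_eq ?_
      simp only [Finset.sum_mul, Matrix.trace_sum, Complex.re_sum, Matrix.smul_mul,
        Matrix.trace_smul, smul_eq_mul, ← Complex.ofReal_pow, Complex.re_ofReal_mul]
    have hA2 := mul_le_mul_of_nonneg_left (tr2 A hAp) hT
    have hC2 := tr2 C hCp
    have fin : ∑ α, 1 * (p α ^ 2 / (q α + T * p α)) =
        2 * ∑ α, y α * p α - ∑ α, y α ^ 2 * q α - T * ∑ α, y α ^ 2 * p α := by
      simp only [Finset.mul_sum, ← Finset.sum_sub_distrib]
      refine Finset.sum_congr rfl fun α _ => ?_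
      simp only [y]
      by_cases h : q α + T * p α = 0
      · simp [h]
      · have e : ∀ a b D : ℝ, D = b + T * a → D ≠ 0 → 1 * (a ^ 2 / D) =
            2 * (a / D * a) - (a / D) ^ 2 * b - T * ((a / D) ^ 2 * a) := by
          intro a b D hD hD0
          have : b = D - T * a := by linarith
          subst this
          field_simp
          ring
        exact e (p α) (q α) _ rfl h
    rw [fin, tr1]
    simp only [p, q] at hA2 hC2 ⊢
    linarith

lemma spec {n : Type*} [Fintype n] [DecidableEq n] (A : Matrix n n ℂ) (hA : A.PosSemidef) :
    ∃ (r : n → ℝ) (U : Matrix n n ℂ), (∀ i, 0 ≤ r i) ∧ U * Uᴴ = 1 ∧ A = U * rdiag r * Uᴴ ∧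
      entropy A = - ∑ i, r i * Real.log (r i) := by
  refine ⟨hA.1.eigenvalues, hA.1.eigenvectorUnitary, hA.eigenvalues_nonneg, ?_, ?_, ?_⟩
  · exact Unitary.mul_star_self_of_mem hA.1.eigenvectorUnitary.2
  · conv_lhs => rw [hA.1.spectral_theorem]
    rw [Unitary.conjStarAlgAut_apply]
    rfl
  · simp [entropy, hA.1, Real.negMulLog]



/-- **Convexity of classical minus quantum entropy on a single space**
(Holevo-type bound): the map `ρ ↦ S^cl[ρ] − S[ρ]` is convex on density
matrices. -/
theorem classical_minus_quantum_entropy_convex_single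
    {n : Type*} [Fintype n] [DecidableEq n] {M : ℕ}
    (P : Fin M → Matrix n n ℂ) (hP : ∀ α, (P α).PosSemidef)
    (hPsum : ∑ α, P α = 1)
    (A B : Matrix n n ℂ)
    (hA : A.PosSemidef) (hAtr : A.trace = 1)
    (hB : B.PosSemidef) (hBtr : B.trace = 1)
    (t : ℝ) (ht0 : 0 ≤ t) (ht1 : t ≤ 1) :
    (∑ α, Real.negMulLog (((P α * ((t : ℂ) • A + ((1 - t : ℝ) : ℂ) • B)).trace).re))
      - entropy ((t : ℂ) • A + ((1 - t : ℝ) : ℂ) • B)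
    ≤ t * ((∑ α, Real.negMulLog (((P α * A).trace).re)) - entropy A)
      + (1 - t) * ((∑ α, Real.negMulLog (((P α * B).trace).re)) - entropy B) := by
  rcases ht0.eq_or_lt with h | h0
  · subst h; simp
  rcases ht1.eq_or_lt with h | h1
  · subst h; simp
  have h1' : 0 < 1 - t := by linarith
  set C := (t : ℂ) • A + ((1 - t : ℝ) : ℂ) • B with hCdef
  have hA' : ((t : ℂ) • A).PosSemidef := hA.smul (by exact_mod_cast h0.le)
  have hB' : (((1 - t : ℝ) : ℂ) • B).PosSemidef := hB.smul (by exact_mod_cast h1'.le)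
  have hC : C.PosSemidef := hA'.add hB'
  obtain ⟨r, U, hr, hU, hAU, eA⟩ := spec A hA
  obtain ⟨b, X, hb, hX, hBX, eB⟩ := spec B hB
  obtain ⟨s, V, hs, hV, hCV, eC⟩ := spec C hC
  have dA := dataproc P hP hPsum r s hr hs U V A C _ hU hV hA hC hAU hCV t h0 hB' hCdef
  have dB := dataproc P hP hPsum b s hb hs X V B C _ hX hV hB hC hBX hCV (1 - t) h1' hA'
    (by rw [hCdef, add_comm])
  have hV' : Vᴴ * V = 1 := mul_eq_one_comm.1 hV
  have hsj : ∀ j, s j = t * ((Vᴴ * A * V) j j).re + (1 - t) * ((Vᴴ * B * V) j j).re := by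
    intro j
    have h1 : Vᴴ * C * V = rdiag s := by
      rw [hCV, show Vᴴ * (V * rdiag s * Vᴴ) * V = (Vᴴ * V) * rdiag s * (Vᴴ * V) by
        simp only [Matrix.mul_assoc], hV']
      simp
    have h2 : s j = ((Vᴴ * C * V) j j).re := by rw [h1]; simp [rdiag]
    rw [h2, hCdef]
    simp only [Matrix.mul_add, Matrix.add_mul, Matrix.mul_smul, Matrix.smul_mul, Matrix.add_apply,
      Matrix.smul_apply, smul_eq_mul, Complex.add_re, Complex.re_ofReal_mul]
  have hq : ∀ α, ((P α * C).trace).re =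
      t * ((P α * A).trace).re + (1 - t) * ((P α * B).trace).re := by
    intro α
    rw [hCdef]
    simp only [Matrix.mul_add, Matrix.mul_smul, Matrix.trace_add, Matrix.trace_smul,
      smul_eq_mul, Complex.add_re, Complex.re_ofReal_mul]
  have f1 : ∑ j, s j * Real.log (s j) = t * ∑ j, ((Vᴴ * A * V) j j).re * Real.log (s j) +
      (1 - t) * ∑ j, ((Vᴴ * B * V) j j).re * Real.log (s j) := by
    rw [Finset.mul_sum, Finset.mul_sum, ← Finset.sum_add_distrib]
    refine Finset.sum_congr rfl fun j _ => ?_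
    nth_rewrite 1 [hsj j]
    ring
  have f2 : ∑ α, Real.negMulLog ((P α * C).trace).re =
      -(t * ∑ α, ((P α * A).trace).re * Real.log ((P α * C).trace).re +
      (1 - t) * ∑ α, ((P α * B).trace).re * Real.log ((P α * C).trace).re) := by
    rw [Finset.mul_sum, Finset.mul_sum, ← Finset.sum_add_distrib, ← Finset.sum_neg_distrib]
    refine Finset.sum_congr rfl fun α _ => ?_
    rw [Real.negMulLog]
    nth_rewrite 1 [hq α]
    ring
  have f3 : ∀ D : Matrix n n ℂ, ∑ α, Real.negMulLog ((P α * D).trace).re =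
      -∑ α, ((P α * D).trace).re * Real.log ((P α * D).trace).re := by
    intro D
    simp [Real.negMulLog]
  rw [f2, f3 A, f3 B, eA, eB, eC, f1]
  simp only [mul_sub, Finset.sum_sub_distrib] at dA dB
  have gA := mul_le_mul_of_nonneg_left dA h0.le
  have gB := mul_le_mul_of_nonneg_left dB h1'.le
  linarith
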